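/- For a proper nonempty subset A of {0,1}^n, the matrix inequality L ⪰ (1/|A|)·log₂(2^n/|A|)·J holds, where L is the matrix indexed by A with L(a,a) = n, L(a,b) = −1 if a ∼ b in the hypercube and 0 otherwise, and J is the all-ones matrix; i.e., L − (1/|A|)log₂(2^n/|A|)·J is positive semidefinite. -/

import Mathlib

open Finset

/-!
Since the cube is `n`-regular, `L` is a principal submatrix of its graph Laplacian, so the claim is
`(∑ x, f x) ^ 2 / |A| * log₂ (2 ^ n / |A|) ≤ ℰ f` for every `f` supported on `A`, where `ℰ` is the
Dirichlet energy of the cube. Replacing `f` by `|f|` only lowers the energy, so let `0 ≤ f` and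
induct on `n`. Cutting the cube along a coordinate splits `f` into `f₀, f₁` with sums `s, r` and
supports of size at most `a, b`, and adds `∑ x, (f₀ x - f₁ x) ^ 2` to the energy; by Cauchy–Schwarz
on the heavier side this is at least `(s - r) ^ 2 / max a b`, the surplus required by
`two_point_inequality`.
-/

section TwoPoint

variable {a b N q s r : ℝ}

lemma le_logb_two_one_add {t : ℝ} (ht₀ : 0 ≤ t) (ht₁ : t ≤ 1) : t ≤ Real.logb 2 (1 + t) := by
  rw [Real.le_logb_iff_rpow_le one_lt_two (by positivity), ← one_add_one_eq_two]
  simpa only [mul_one] using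
    rpow_one_add_le_one_add_mul_self (s := 1) (by norm_num) ht₀ ht₁

lemma logb_two_mul_div_add_nonneg (hb : 0 < b) (hba : b ≤ a) :
    0 ≤ Real.logb 2 (2 * a / (a + b)) := by
  refine Real.logb_nonneg one_lt_two ?_
  rw [one_le_div (by linarith)]
  linarith

lemma logb_two_mul_div_add_le_sub_div (hb : 0 < b) (hba : b ≤ a) :
    Real.logb 2 (2 * a / (a + b)) ≤ (a - b) / a := by
  have ha : 0 < a := hb.trans_le hba
  have hconcave : b / a ≤ Real.logb 2 (1 + b / a) :=
    le_logb_two_one_add (by positivity) ((div_le_one ha).2 hba)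
  have hlog : Real.logb 2 (2 * a / (a + b)) = 1 - Real.logb 2 (1 + b / a) := by
    rw [show 2 * a / (a + b) = 2 / (1 + b / a) by field_simp,
      Real.logb_div two_ne_zero (by positivity), Real.logb_self_eq_one one_lt_two]
  rw [hlog, sub_div, div_self ha.ne']
  linarith

lemma two_mul_logb_two_mul_div_add_le_logb_div (ha : 0 < a) (hb : 0 < b) :
    2 * Real.logb 2 (2 * a / (a + b)) ≤ Real.logb 2 (a / b) := by
  calc 2 * Real.logb 2 (2 * a / (a + b)) = Real.logb 2 ((2 * a / (a + b)) ^ 2) := by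
        rw [Real.logb_pow, Nat.cast_ofNat]
    _ ≤ Real.logb 2 (a / b) := by
        refine Real.logb_le_logb_of_le one_lt_two (by positivity) ?_
        rw [div_pow, div_le_div_iff₀ (by positivity) hb]
        nlinarith [mul_nonneg ha.le (sq_nonneg (a - b))]

lemma sub_mul_sq_add_div_sub_le_sq_sub (ha : 0 < a) (hb : 0 < b) :
    (a - b) * ((s + r) ^ 2 / (a + b) - 2 * (r ^ 2 / b)) ≤ (s - r) ^ 2 := by
  have hgap : (s - r) ^ 2 - (a - b) * ((s + r) ^ 2 / (a + b) - 2 * (r ^ 2 / b)) =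
      2 * (b * s - a * r) ^ 2 / (b * (a + b)) := by
    field_simp
    ring
  have : 0 ≤ 2 * (b * s - a * r) ^ 2 / (b * (a + b)) := by positivity
  linarith

lemma sq_add_div_mul_le (hb : 0 < b) (hba : b ≤ a) (hq₀ : 0 ≤ q) (hq : q ≤ (a - b) / a) :
    (s + r) ^ 2 / (a + b) * q ≤ r ^ 2 / b * (2 * q) + (s - r) ^ 2 / a := by
  have ha : 0 < a := hb.trans_le hba
  set X := (s + r) ^ 2 / (a + b) - 2 * (r ^ 2 / b) with hX
  suffices q * X ≤ (s - r) ^ 2 / a by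
    linear_combination this + q * hX
  rcases le_total X 0 with hX₀ | hX₀
  · exact (mul_nonpos_of_nonneg_of_nonpos hq₀ hX₀).trans (by positivity)
  · calc q * X ≤ (a - b) / a * X := by gcongr
      _ = (a - b) * X / a := by ring
      _ ≤ (s - r) ^ 2 / a := by gcongr; exact sub_mul_sq_add_div_sub_le_sq_sub ha hb

lemma sq_add_div_add_le (ha : 0 < a) (hb : 0 < b) :
    (s + r) ^ 2 / (a + b) ≤ s ^ 2 / a + r ^ 2 / b := by
  simpa using sq_sum_div_le_sum_sq_div univ ![s, r] (g := ![a, b]) (by simp [Fin.forall_fin_two, *])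

lemma two_point_inequality_of_le (hb : 0 < b) (hba : b ≤ a) (haN : a ≤ N) :
    (s + r) ^ 2 / (a + b) * Real.logb 2 (2 * N / (a + b)) ≤
      s ^ 2 / a * Real.logb 2 (N / a) + r ^ 2 / b * Real.logb 2 (N / b) + (s - r) ^ 2 / a := by
  have ha : 0 < a := hb.trans_le hba
  have hN : 0 < N := ha.trans_le haN
  set k := Real.logb 2 (N / a)
  set q := Real.logb 2 (2 * a / (a + b))
  have hk : 0 ≤ k := Real.logb_nonneg one_lt_two ((one_le_div ha).2 haN)
  have hsum : Real.logb 2 (2 * N / (a + b)) = k + q := by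
    rw [← Real.logb_mul (by positivity) (by positivity)]
    congr 1
    field_simp
  have hsmall : Real.logb 2 (N / b) = k + Real.logb 2 (a / b) := by
    rw [← Real.logb_mul (by positivity) (by positivity)]
    congr 1
    field_simp
  have hq : (s + r) ^ 2 / (a + b) * q ≤ r ^ 2 / b * (2 * q) + (s - r) ^ 2 / a :=
    sq_add_div_mul_le hb hba (logb_two_mul_div_add_nonneg hb hba)
      (logb_two_mul_div_add_le_sub_div hb hba)
  have hq₂ : 2 * q ≤ Real.logb 2 (a / b) := two_mul_logb_two_mul_div_add_le_logb_div ha hb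
  rw [hsum, hsmall]
  calc (s + r) ^ 2 / (a + b) * (k + q)
      = (s + r) ^ 2 / (a + b) * k + (s + r) ^ 2 / (a + b) * q := mul_add _ _ _
    _ ≤ (s ^ 2 / a + r ^ 2 / b) * k + (r ^ 2 / b * Real.logb 2 (a / b) + (s - r) ^ 2 / a) := by
        gcongr
        · exact sq_add_div_add_le ha hb
        · exact hq.trans (by gcongr)
    _ = s ^ 2 / a * k + r ^ 2 / b * (k + Real.logb 2 (a / b)) + (s - r) ^ 2 / a := by ring

theorem two_point_inequality (ha : 0 ≤ a) (hb : 0 ≤ b) (haN : a ≤ N) (hbN : b ≤ N)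
    (hs : a = 0 → s = 0) (hr : b = 0 → r = 0) :
    (s + r) ^ 2 / (a + b) * Real.logb 2 (2 * N / (a + b)) ≤
      s ^ 2 / a * Real.logb 2 (N / a) + r ^ 2 / b * Real.logb 2 (N / b) +
        (s - r) ^ 2 / max a b := by
  wlog hba : b ≤ a generalizing a b s r
  · have := this hb ha hbN haN hr hs (le_of_not_ge hba)
    rwa [add_comm r s, add_comm b a, max_comm b a, sub_sq_comm r s,
      add_comm (r ^ 2 / b * _) (s ^ 2 / a * _)] at this
  rw [max_eq_left hba]
  rcases hb.eq_or_lt with rfl | hb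
  · obtain rfl : r = 0 := hr rfl
    rcases ha.eq_or_lt with rfl | ha
    · simp
    · have hN : 0 < N := ha.trans_le haN
      have hlog : Real.logb 2 (2 * N / a) = 1 + Real.logb 2 (N / a) := by
        rw [mul_div_assoc, Real.logb_mul two_ne_zero (by positivity),
          Real.logb_self_eq_one one_lt_two]
      simp only [add_zero, sub_zero, hlog]
      apply le_of_eq
      ring
  · exact two_point_inequality_of_le hb hba haN

end TwoPoint

section DirichletEnergy

variable {V : Type*} [Fintype V]

/-- The Dirichlet energy `∑ (f x - f y) ^ 2` of a function on the vertices of a graph, the sum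
running over unordered edges `xy`; the `1 / 2` compensates for summing over ordered pairs. -/
noncomputable def dirichletEnergy (G : SimpleGraph V) [DecidableRel G.Adj] (f : V → ℝ) : ℝ :=
  (∑ x, ∑ y, if G.Adj x y then (f x - f y) ^ 2 else 0) / 2

lemma dirichletEnergy_nonneg (G : SimpleGraph V) [DecidableRel G.Adj] (f : V → ℝ) :
    0 ≤ dirichletEnergy G f := by
  unfold dirichletEnergy
  positivity

lemma dirichletEnergy_abs_le (G : SimpleGraph V) [DecidableRel G.Adj] (f : V → ℝ) :
    dirichletEnergy G (fun x ↦ |f x|) ≤ dirichletEnergy G f := by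
  unfold dirichletEnergy
  gcongr (∑ x, ∑ y, ?_) / 2 with x _ y _
  split_ifs
  · exact sq_le_sq.2 (abs_abs_sub_abs_le _ _)
  · rfl

lemma dotProduct_lapMatrix_mulVec [DecidableEq V] (G : SimpleGraph V) [DecidableRel G.Adj]
    (f : V → ℝ) : f ⬝ᵥ (G.lapMatrix ℝ).mulVec f = dirichletEnergy G f := by
  rw [← Matrix.toLinearMap₂'_apply', SimpleGraph.lapMatrix_toLinearMap₂', dirichletEnergy]

end DirichletEnergy

lemma sq_sum_sub_sum_div_max_card_le {V : Type*} [Fintype V] {A B : Finset V} {f g : V → ℝ}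
    (hf₀ : 0 ≤ f) (hg₀ : 0 ≤ g) (hf : ∀ x ∉ A, f x = 0) (hg : ∀ x ∉ B, g x = 0) :
    (∑ x, f x - ∑ x, g x) ^ 2 / max (#A : ℝ) #B ≤ ∑ x, (f x - g x) ^ 2 := by
  wlog hgf : ∑ x, g x ≤ ∑ x, f x generalizing A B f g
  · have := this hg₀ hf₀ hg hf (le_of_not_ge hgf)
    simpa only [sub_sq_comm, max_comm] using this
  have hfA : ∑ x ∈ A, f x = ∑ x, f x := sum_subset (subset_univ A) fun x _ ↦ hf x
  have hgA : ∑ x ∈ A, g x ≤ ∑ x, g x :=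
    sum_le_sum_of_subset_of_nonneg (subset_univ A) fun x _ _ ↦ hg₀ x
  have hdiff : ∑ x, f x - ∑ x, g x ≤ ∑ x ∈ A, (f x - g x) := by
    rw [sum_sub_distrib]
    linarith
  refine div_le_of_le_mul₀ (by positivity) (by positivity) ?_
  calc (∑ x, f x - ∑ x, g x) ^ 2
      ≤ (∑ x ∈ A, (f x - g x)) ^ 2 := pow_le_pow_left₀ (sub_nonneg.2 hgf) hdiff 2
    _ ≤ #A * ∑ x ∈ A, (f x - g x) ^ 2 := sq_sum_le_card_mul_sum_sq
    _ ≤ #A * ∑ x, (f x - g x) ^ 2 := by gcongr; exact subset_univ A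
    _ ≤ (∑ x, (f x - g x) ^ 2) * max (#A : ℝ) #B := by
        rw [mul_comm]
        gcongr
        exact le_max_left _ _

lemma sum_fin_succ_arrow {n : ℕ} {α M : Type*} [Fintype α] [AddCommMonoid M]
    (g : (Fin (n + 1) → α) → M) :
    ∑ x, g x = ∑ a, ∑ x : Fin n → α, g (Fin.cons a x) := by
  rw [← (Fin.consEquiv fun _ ↦ α).sum_comp, Fintype.sum_prod_type]
  rfl

section SupportedOn

variable {V κ R : Type*} [Fintype V] [Fintype κ]

lemma extend_zero_dotProduct [NonUnitalNonAssocSemiring R] {e : κ → V} (he : e.Injective)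
    (v : κ → R) (w : V → R) : Function.extend e v 0 ⬝ᵥ w = v ⬝ᵥ w ∘ e := by
  refine (Fintype.sum_of_injective e he _ _ (fun x hx ↦ ?_) fun a ↦ ?_).symm
  · rw [Function.extend_apply' _ _ _ hx, Pi.zero_apply, zero_mul]
  · rw [he.extend_apply, Function.comp_apply]

lemma dotProduct_submatrix_mulVec [CommSemiring R] {e : κ → V} (he : e.Injective)
    (M : Matrix V V R) (v w : κ → R) :
    v ⬝ᵥ (M.submatrix e e).mulVec w =
      Function.extend e v 0 ⬝ᵥ M.mulVec (Function.extend e w 0) := by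
  rw [extend_zero_dotProduct he]
  congr 1
  ext a
  simp only [Function.comp_apply, Matrix.mulVec]
  rw [dotProduct_comm (M (e a)), extend_zero_dotProduct he, dotProduct_comm]
  rfl

lemma dotProduct_of_one_mulVec [CommSemiring R] (f : V → R) :
    f ⬝ᵥ (Matrix.of fun _ _ : V ↦ (1 : R)).mulVec f = (∑ x, f x) ^ 2 := by
  simp only [dotProduct, Matrix.mulVec, Matrix.of_apply, one_mul]
  rw [← sum_mul, ← pow_two]

lemma posSemidef_submatrix_of_dotProduct_mulVec_nonneg {A : Finset V} {M : Matrix V V ℝ}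
    (hM : M.IsHermitian) (hA : ∀ f : V → ℝ, (∀ x ∉ A, f x = 0) → 0 ≤ f ⬝ᵥ M.mulVec f) :
    (M.submatrix (Subtype.val : A → V) Subtype.val).PosSemidef := by
  refine .of_dotProduct_mulVec_nonneg (hM.submatrix _) fun v ↦ ?_
  rw [star_trivial, dotProduct_submatrix_mulVec Subtype.val_injective]
  exact hA _ fun x hx ↦ Function.extend_apply' _ _ _ (by simpa using hx)

end SupportedOn

section Hypercube

variable {n : ℕ}

/-- The graph of the cube `{0,1}^n`: two points are adjacent when they differ in exactly one
coordinate. -/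
def hypercubeGraph (n : ℕ) : SimpleGraph (Fin n → Bool) where
  Adj x y := hammingDist x y = 1
  symm := ⟨fun x y h ↦ by rwa [hammingDist_comm]⟩
  loopless := ⟨fun x h ↦ by simp at h⟩

instance : DecidableRel (hypercubeGraph n).Adj :=
  fun x y ↦ inferInstanceAs (Decidable (hammingDist x y = 1))

lemma hypercubeGraph_adj_cons {b c : Bool} {x y : Fin n → Bool} :
    (hypercubeGraph (n + 1)).Adj (Fin.cons b x) (Fin.cons c y) ↔
      b = c ∧ (hypercubeGraph n).Adj x y ∨ b ≠ c ∧ x = y := by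
  have hcons : hammingDist (Fin.cons b x : Fin (n + 1) → Bool) (Fin.cons c y) =
      (if b ≠ c then 1 else 0) + hammingDist x y := by
    simp only [hammingDist, Fin.card_filter_univ_succ, Fin.cons_zero, Fin.cons_succ]
    split_ifs <;> omega
  simp only [hypercubeGraph, hcons]
  by_cases hbc : b = c <;> simp [hbc]

lemma hypercubeGraph_isRegularOfDegree : ∀ n, (hypercubeGraph n).IsRegularOfDegree n
  | 0 => fun x ↦ by
      rw [← Nat.cast_id (SimpleGraph.degree _ _), SimpleGraph.degree_eq_sum_if_adj]
      simp [hypercubeGraph, Subsingleton.elim _ x]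
  | n + 1 => fun x ↦ by
      induction x using Fin.consCases with
      | _ b x =>
      have hx := hypercubeGraph_isRegularOfDegree n x
      rw [← Nat.cast_id (SimpleGraph.degree _ _), SimpleGraph.degree_eq_sum_if_adj] at hx ⊢
      rw [sum_fin_succ_arrow]
      simp only [hypercubeGraph_adj_cons]
      cases b <;> simp [hx, add_comm, -sum_boole, -Nat.cast_id]

lemma dirichletEnergy_hypercubeGraph_succ (f : (Fin (n + 1) → Bool) → ℝ) :
    dirichletEnergy (hypercubeGraph (n + 1)) f =
      dirichletEnergy (hypercubeGraph n) (fun x ↦ f (Fin.cons false x)) +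
        dirichletEnergy (hypercubeGraph n) (fun x ↦ f (Fin.cons true x)) +
        ∑ x : Fin n → Bool, (f (Fin.cons false x) - f (Fin.cons true x)) ^ 2 := by
  simp only [dirichletEnergy, sum_fin_succ_arrow, Fintype.sum_bool, hypercubeGraph_adj_cons]
  simp only [reduceCtorEq, ne_eq, not_true_eq_false, not_false_eq_true, true_and, false_and,
    or_false, false_or, sum_add_distrib, sum_ite_eq, mem_univ, if_true]
  simp only [sub_sq_comm (f (Fin.cons true _)) (f (Fin.cons false _))]
  ring

/-- The facet `x₀ = b` of a subset of the cube, as a subset of the cube of one dimension less. -/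
def facet (A : Finset (Fin (n + 1) → Bool)) (b : Bool) : Finset (Fin n → Bool) :=
  {x | Fin.cons b x ∈ A}

lemma card_eq_card_facet_add_card_facet (A : Finset (Fin (n + 1) → Bool)) :
    #A = #(facet A false) + #(facet A true) := by
  have := sum_fin_succ_arrow fun x ↦ if x ∈ A then 1 else 0
  simpa [facet, add_comm] using this

lemma card_le_two_pow (A : Finset (Fin n → Bool)) : (#A : ℝ) ≤ 2 ^ n := by
  exact_mod_cast A.card_le_univ.trans_eq (by simp)

lemma sq_sum_div_card_mul_logb_le_dirichletEnergy_of_nonneg :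
    ∀ {n : ℕ} (A : Finset (Fin n → Bool)) {f : (Fin n → Bool) → ℝ},
      0 ≤ f → (∀ x ∉ A, f x = 0) →
      (∑ x, f x) ^ 2 / #A * Real.logb 2 (2 ^ n / #A) ≤ dirichletEnergy (hypercubeGraph n) f
  | 0, A, f, _, _ => by
      have hcard : #A ≤ 1 := A.card_le_univ
      have hlog : Real.logb 2 (2 ^ 0 / #A) = 0 := by interval_cases #A <;> simp
      rw [hlog, mul_zero]
      exact dirichletEnergy_nonneg _ f
  | n + 1, A, f, hf₀, hf => by
      let g (b : Bool) (x : Fin n → Bool) : ℝ := f (Fin.cons b x)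
      have hg₀ b : 0 ≤ g b := fun x ↦ hf₀ _
      have hg b : ∀ x ∉ facet A b, g b x = 0 := fun x hx ↦ hf _ (by simpa [facet] using hx)
      have hsum_zero b (hb : (#(facet A b) : ℝ) = 0) : ∑ x, g b x = 0 := by
        have hempty : facet A b = ∅ := by simpa using hb
        exact sum_eq_zero fun x _ ↦ hg b x (by simp [hempty])
      have hih b := sq_sum_div_card_mul_logb_le_dirichletEnergy_of_nonneg _ (hg₀ b) (hg b)
      calc (∑ x, f x) ^ 2 / #A * Real.logb 2 (2 ^ (n + 1) / #A)
          = (∑ x, g false x + ∑ x, g true x) ^ 2 / (#(facet A false) + #(facet A true)) *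
              Real.logb 2 (2 * 2 ^ n / (#(facet A false) + #(facet A true))) := by
            rw [sum_fin_succ_arrow, Fintype.sum_bool, card_eq_card_facet_add_card_facet,
              Nat.cast_add, pow_succ' (2 : ℝ) n, add_comm (∑ x, f (Fin.cons true x))]
        _ ≤ _ := two_point_inequality (Nat.cast_nonneg _) (Nat.cast_nonneg _) (card_le_two_pow _)
            (card_le_two_pow _) (hsum_zero false) (hsum_zero true)
        _ ≤ dirichletEnergy (hypercubeGraph n) (g false) +
              dirichletEnergy (hypercubeGraph n) (g true) + ∑ x, (g false x - g true x) ^ 2 :=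
            add_le_add (add_le_add (hih false) (hih true)) <|
              sq_sum_sub_sum_div_max_card_le (hg₀ false) (hg₀ true) (hg false) (hg true)
        _ = dirichletEnergy (hypercubeGraph (n + 1)) f :=
            (dirichletEnergy_hypercubeGraph_succ f).symm

theorem sq_sum_div_card_mul_logb_le_dirichletEnergy (A : Finset (Fin n → Bool))
    {f : (Fin n → Bool) → ℝ} (hf : ∀ x ∉ A, f x = 0) :
    (∑ x, f x) ^ 2 / #A * Real.logb 2 (2 ^ n / #A) ≤ dirichletEnergy (hypercubeGraph n) f := by
  rcases A.eq_empty_or_nonempty with rfl | hA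
  · simpa using dirichletEnergy_nonneg _ f
  have hlog : 0 ≤ Real.logb 2 (2 ^ n / #A) :=
    Real.logb_nonneg one_lt_two ((one_le_div (by exact_mod_cast hA.card_pos)).2 (card_le_two_pow A))
  calc (∑ x, f x) ^ 2 / #A * Real.logb 2 (2 ^ n / #A)
      ≤ (∑ x, |f x|) ^ 2 / #A * Real.logb 2 (2 ^ n / #A) := by
        gcongr ?_ / _ * _
        exact sq_le_sq.2 ((abs_sum_le_sum_abs f univ).trans (le_abs_self _))
    _ ≤ dirichletEnergy (hypercubeGraph n) fun x ↦ |f x| :=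
        sq_sum_div_card_mul_logb_le_dirichletEnergy_of_nonneg A (fun x ↦ abs_nonneg _)
          fun x hx ↦ by simp [hf x hx]
    _ ≤ dirichletEnergy (hypercubeGraph n) f := dirichletEnergy_abs_le _ f

lemma lapMatrix_hypercubeGraph_apply (x y : Fin n → Bool) :
    (hypercubeGraph n).lapMatrix ℝ x y =
      if x = y then (n : ℝ) else if #{i | x i ≠ y i} = 1 then -1 else 0 := by
  rw [SimpleGraph.lapMatrix, Matrix.sub_apply, SimpleGraph.adjMatrix_apply, SimpleGraph.degMatrix]
  rcases eq_or_ne x y with rfl | hxy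
  · simp [(hypercubeGraph_isRegularOfDegree n).degree_eq]
  · rw [Matrix.diagonal_apply_ne _ hxy, if_neg hxy, zero_sub, neg_ite, neg_zero]
    rfl

end Hypercube

/-- Matrix form of the isoperimetric inequality: for a proper nonempty subset `A` of
the cube, `L ⪰ (1/|A|)·log₂(2^n/|A|)·J`, where `L(a,a) = n`, `L(a,b) = -1` if `a ∼ b`
and `0` otherwise, and `J` is the all-ones matrix on `A`. -/
theorem matrix_isoperimetric (n : ℕ) (A : Finset (Fin n → Bool))
    (hA : A.Nonempty) (hA' : A.card < 2 ^ n)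
    (L : Matrix A A ℝ)
    (hL : ∀ a b : A, L a b =
      if a = b then (n : ℝ)
      else if (univ.filter fun i => (a : Fin n → Bool) i ≠ (b : Fin n → Bool) i).card = 1
      then -1 else 0) :
    (L - ((1 / (A.card : ℝ)) * Real.logb 2 ((2 : ℝ) ^ n / (A.card : ℝ))) •
        Matrix.of (fun _ _ : A => (1 : ℝ))).PosSemidef := by
  set c := 1 / (#A : ℝ) * Real.logb 2 (2 ^ n / #A)
  let M : Matrix (Fin n → Bool) (Fin n → Bool) ℝ :=
    (hypercubeGraph n).lapMatrix ℝ - c • Matrix.of fun _ _ ↦ 1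
  have hLM : L - c • Matrix.of (fun _ _ : A ↦ (1 : ℝ)) =
      M.submatrix Subtype.val Subtype.val := by
    ext a b
    simp only [M, hL, Matrix.sub_apply, Matrix.submatrix_apply, Matrix.smul_apply, Matrix.of_apply,
      lapMatrix_hypercubeGraph_apply, Subtype.ext_iff]
  have hM : M.IsHermitian :=
    ((hypercubeGraph n).isHermitian_lapMatrix ℝ).sub (.ext fun _ _ ↦ rfl)
  rw [hLM]
  refine posSemidef_submatrix_of_dotProduct_mulVec_nonneg hM fun f hf ↦ ?_
  have hquad : f ⬝ᵥ M.mulVec f = dirichletEnergy (hypercubeGraph n) f - c * (∑ x, f x) ^ 2 := by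
    rw [Matrix.sub_mulVec, dotProduct_sub, dotProduct_lapMatrix_mulVec, Matrix.smul_mulVec,
      dotProduct_smul, dotProduct_of_one_mulVec, smul_eq_mul]
  rw [hquad, sub_nonneg]
  convert sq_sum_div_card_mul_logb_le_dirichletEnergy A hf using 1
  ring
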